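/- Under the hypotheses of the zero-temperature theorem, lim_{t→∞} h_{μ_t}(T) = lim_{t→∞} P(tΦ − tβ(Φ)), both limits existing, and this common value is ≥ sup{h_ν(T) : ν ∈ M_max(Φ)}. -/

import Mathlib

open MeasureTheory Filter Topology Set
open scoped ENNReal NNReal

/-- Positive part of an extended real, as an extended nonnegative real. -/
noncomputable def EReal.posPart (a : EReal) : ℝ≥0∞ :=
  if a = ⊤ then ⊤ else ENNReal.ofReal a.toReal

/-- `EReal`-valued logarithm of a real number: `elog r = -∞` for `r ≤ 0`. -/
noncomputable def elog (r : ℝ) : EReal := ENNReal.log (ENNReal.ofReal r)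

/-- The integral of an `EReal`-valued function, with values in `[-∞, ∞]`. -/
noncomputable def eint {X : Type*} [MeasurableSpace X] (μ : Measure X) (f : X → EReal) : EReal :=
  ((∫⁻ x, (f x).posPart ∂μ : ℝ≥0∞) : EReal) - ((∫⁻ x, (-f x).posPart ∂μ : ℝ≥0∞) : EReal)

/-- `Φ = {log φₙ}` is a subadditive potential for `T`: each `φₙ` is continuous,
nonnegative, and `φ_{n+m}(x) ≤ φₙ(x) · φₘ(Tⁿ x)`. -/
def SubadditivePotential {X : Type*} [TopologicalSpace X] (T : X → X) (φ : ℕ → X → ℝ) : Prop :=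
  (∀ n, 1 ≤ n → Continuous (φ n)) ∧ (∀ n x, 1 ≤ n → 0 ≤ φ n x) ∧
    (∀ m n : ℕ, 1 ≤ m → 1 ≤ n → ∀ x, φ (n + m) x ≤ φ n x * φ m (T^[n] x))

/-! For an equilibrium state `μ_t` the affine function `s ↦ h(μ_t) + s (χ(μ_t) - β)` lies below
`Q(s) = P(s) - s β` by the variational principle and touches it at `s = t`. Its slope is nonpositive
because `χ ≤ β` on invariant measures, so `Q` is nonincreasing; it is bounded below by the entropy
of any maximizing measure, hence converges. Comparing `t` with `t / 2` bounds `-t (χ(μ_t) - β)` by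
`2 (Q(t / 2) - Q(t)) → 0`, so the intercepts `h(μ_t) = Q(t) - t (χ(μ_t) - β)` have the same limit.

A maximizing measure is a limit of empirical measures along orbits of points where `φ_n` attains its
maximum. Since `log φ_k` may take the value `-∞`, it is compared with continuous functions
`ψ ≥ log φ_k` for which weak convergence applies, and `∫ log φ_k` is recovered by truncation. -/

section SupportingLines

lemma exists_tendsto_of_antitoneOn_Ioi {α : Type*} [LinearOrder α] [NoMaxOrder α] {f : α → ℝ}
    {a : α} (hf : AntitoneOn f (Ioi a)) (hb : BddBelow (f '' Ioi a)) :
    ∃ L, Tendsto f atTop (𝓝 L) :=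
  ⟨_, tendsto_comp_val_Ioi_atTop.1 <| tendsto_atTop_ciInf (antitoneOn_iff_antitone.1 hf) <| by
    rwa [image_eq_range] at hb⟩

lemma tendsto_mul_slope_of_supporting_lines {Q d : ℝ → ℝ} {L : ℝ} (hd : ∀ t > 0, d t ≤ 0)
    (hQd : ∀ s > 0, ∀ t > 0, Q t + (s - t) * d t ≤ Q s) (hQ : Tendsto Q atTop (𝓝 L)) :
    Tendsto (fun t => t * d t) atTop (𝓝 0) := by
  have hhalf : Tendsto (fun t => Q (t / 2)) atTop (𝓝 L) :=
    hQ.comp (tendsto_id.atTop_div_const two_pos)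
  have hlower : Tendsto (fun t => -2 * (Q (t / 2) - Q t)) atTop (𝓝 0) := by
    simpa using (hhalf.sub hQ).const_mul (-2)
  refine tendsto_of_tendsto_of_tendsto_of_le_of_le' hlower tendsto_const_nhds ?_ ?_
  · filter_upwards [eventually_gt_atTop 0] with t ht
    linarith [hQd (t / 2) (half_pos ht) t ht]
  · filter_upwards [eventually_gt_atTop 0] with t ht
    exact mul_nonpos_of_nonneg_of_nonpos ht.le (hd t ht)

lemma exists_tendsto_of_supporting_lines {Q d : ℝ → ℝ} {b : ℝ} (hd : ∀ t > 0, d t ≤ 0)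
    (hQd : ∀ s > 0, ∀ t > 0, Q t + (s - t) * d t ≤ Q s) (hb : ∀ t > 0, b ≤ Q t) :
    ∃ L, Tendsto (fun t => Q t - t * d t) atTop (𝓝 L) ∧ Tendsto Q atTop (𝓝 L) := by
  have hanti : AntitoneOn Q (Ioi 0) := fun s hs t ht hst => by
    linarith [hQd s hs t ht, mul_nonneg_of_nonpos_of_nonpos (sub_nonpos.2 hst) (hd t ht)]
  obtain ⟨L, hL⟩ := exists_tendsto_of_antitoneOn_Ioi hanti ⟨b, forall_mem_image.2 hb⟩
  exact ⟨L, by simpa using hL.sub (tendsto_mul_slope_of_supporting_lines hd hQd hL), hL⟩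

end SupportingLines

section EquilibriumStates

lemma coe_toReal_of_coe_add_mul_eq_coe {a b t p : ℝ} {x : EReal} (ht : 0 < t) (hx : x ≤ b)
    (h : (a : EReal) + t * x = p) : (x.toReal : EReal) = x := by
  refine EReal.coe_toReal (ne_top_of_le_ne_top (EReal.coe_ne_top b) hx) fun hbot => ?_
  rw [hbot, EReal.coe_mul_bot_of_pos ht, EReal.add_bot] at h
  exact EReal.bot_ne_coe p h

theorem exists_tendsto_entropy_and_pressure {M : Type*} {S : Set M} {h : M → ℝ} {χ : M → EReal}
    {β : ℝ} (hχβ : ∀ ν ∈ S, χ ν ≤ β) (hmax : ∃ μ ∈ S, χ μ = β) {P : ℝ → ℝ}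
    (hP : ∀ t : ℝ, 0 < t → ∀ ν ∈ S, (h ν : EReal) + (t : EReal) * χ ν ≤ P t) {μt : ℝ → M}
    (hS : ∀ t > 0, μt t ∈ S)
    (hEq : ∀ t : ℝ, 0 < t → (h (μt t) : EReal) + (t : EReal) * χ (μt t) = P t) :
    ∃ L : ℝ, Tendsto (fun t => h (μt t)) atTop (𝓝 L) ∧
      Tendsto (fun t => P t - t * β) atTop (𝓝 L) ∧ ∀ ν ∈ S, χ ν = β → h ν ≤ L := by
  set c : ℝ → ℝ := fun t => (χ (μt t)).toReal
  have hc : ∀ t > 0, (c t : EReal) = χ (μt t) := fun t ht =>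
    coe_toReal_of_coe_add_mul_eq_coe ht (hχβ _ (hS t ht)) (hEq t ht)
  have hcβ : ∀ t > 0, c t ≤ β := fun t ht => by
    exact_mod_cast (hc t ht).trans_le (hχβ _ (hS t ht))
  have hPc : ∀ t > 0, h (μt t) + t * c t = P t := fun t ht => by
    have := hEq t ht
    rw [← hc t ht] at this
    exact_mod_cast this
  have hvar : ∀ t > 0, ∀ ν ∈ S, ∀ r : ℝ, χ ν = r → h ν + t * r ≤ P t := fun t ht ν hν r hr => by
    have := hP t ht ν hν
    rw [hr] at this
    exact_mod_cast this
  have hmaxP : ∀ ν ∈ S, χ ν = β → ∀ t > 0, h ν ≤ P t - t * β := fun ν hν hνβ t ht => by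
    linarith [hvar t ht ν hν β hνβ]
  obtain ⟨μ, hμ, hμβ⟩ := hmax
  obtain ⟨L, hh, hL⟩ := exists_tendsto_of_supporting_lines (Q := fun t => P t - t * β)
    (d := fun t => c t - β) (fun t ht => sub_nonpos.2 (hcβ t ht))
    (fun s hs t ht => by linarith [hPc t ht, hvar s hs _ (hS t ht) _ (hc t ht).symm])
    (hmaxP μ hμ hμβ)
  refine ⟨L, hh.congr' ?_, hL, fun ν hν hνβ => ge_of_tendsto hL ?_⟩
  · filter_upwards [eventually_gt_atTop 0] with t ht
    linarith [hPc t ht]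
  · filter_upwards [eventually_gt_atTop 0] with t ht
    exact hmaxP ν hν hνβ t ht

end EquilibriumStates

section ExtendedIntegral

lemma max_elog_neg_natCast (r : ℝ) (N : ℕ) :
    max (elog r) (-(N : EReal)) = (Real.log (max r (Real.exp (-N))) : ℝ) := by
  have hN : elog (Real.exp (-N)) = -(N : EReal) := by
    simp [elog, ENNReal.log_ofReal_of_pos (Real.exp_pos _)]
  have hmono : Monotone elog := ENNReal.log_monotone.comp ENNReal.ofReal_mono
  rw [← hN, ← hmono.map_max]
  exact ENNReal.log_ofReal_of_pos (lt_max_of_lt_right (Real.exp_pos _))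

variable {X : Type*} [MeasurableSpace X] {μ : Measure X}

lemma eint_eq_lintegral_toENNReal_sub (μ : Measure X) (f : X → EReal) :
    eint μ f = ((∫⁻ x, (f x).toENNReal ∂μ : ℝ≥0∞) : EReal) -
      ((∫⁻ x, (-f x).toENNReal ∂μ : ℝ≥0∞) : EReal) :=
  rfl

lemma eint_mono {f g : X → EReal} (hfg : ∀ x, f x ≤ g x) : eint μ f ≤ eint μ g := by
  simp only [eint_eq_lintegral_toENNReal_sub]
  refine EReal.sub_le_sub ?_ ?_ <;>
    refine EReal.coe_ennreal_le_coe_ennreal_iff.2 (lintegral_mono fun x => ?_)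
  · exact EReal.toENNReal_le_toENNReal (hfg x)
  · exact EReal.toENNReal_le_toENNReal (EReal.neg_le_neg_iff.2 (hfg x))

lemma eint_const [IsProbabilityMeasure μ] (c : EReal) : eint μ (fun _ => c) = c := by
  simp only [eint_eq_lintegral_toENNReal_sub, lintegral_const, measure_univ, mul_one]
  rcases le_total 0 c with hc | hc
  · simp [EReal.coe_toENNReal hc, EReal.toENNReal_of_nonpos (EReal.neg_le_zero.2 hc)]
  · simp [EReal.coe_toENNReal (EReal.neg_nonneg.2 hc), EReal.toENNReal_of_nonpos hc]

lemma eint_coe {g : X → ℝ} (hg : Integrable g μ) :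
    eint μ (fun x => (g x : EReal)) = ((∫ x, g x ∂μ : ℝ) : EReal) := by
  have hneg : ∫⁻ x, ENNReal.ofReal (-g x) ∂μ ≠ ⊤ := hg.neg.lintegral_lt_top.ne
  rw [integral_eq_lintegral_pos_part_sub_lintegral_neg_part hg, EReal.coe_sub,
    EReal.coe_ennreal_toReal hg.lintegral_lt_top.ne, EReal.coe_ennreal_toReal hneg]
  simp only [eint_eq_lintegral_toENNReal_sub, ← EReal.coe_neg, EReal.real_coe_toENNReal]

lemma tendsto_eint_max_neg_natCast {f : X → EReal} (hf : AEMeasurable f μ)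
    (hfin : ∫⁻ x, (f x).toENNReal ∂μ ≠ ⊤) :
    Tendsto (fun N : ℕ => eint μ fun x => max (f x) (-(N : EReal))) atTop (𝓝 (eint μ f)) := by
  have hpos : ∀ (N : ℕ) x, (max (f x) (-(N : EReal))).toENNReal = (f x).toENNReal := fun N x => by
    have hmono : Monotone EReal.toENNReal := fun _ _ => EReal.toENNReal_le_toENNReal
    rw [hmono.map_max, EReal.toENNReal_of_nonpos (x := -(N : EReal)) (by simp)]
    exact max_eq_left zero_le
  have htop : Tendsto (fun N : ℕ => (N : EReal)) atTop (𝓝 ⊤) :=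
    EReal.tendsto_coe_nhds_top_iff.2 tendsto_natCast_atTop_atTop
  have hneg : Tendsto (fun N : ℕ => ∫⁻ x, (-max (f x) (-(N : EReal))).toENNReal ∂μ) atTop
      (𝓝 (∫⁻ x, (-f x).toENNReal ∂μ)) := by
    refine lintegral_tendsto_of_tendsto_of_monotone
      (fun N => (hf.sup_const _).neg.ereal_toENNReal) (.of_forall fun x M N hMN => ?_)
      (.of_forall fun x => (EReal.continuous_toENNReal.tendsto _).comp ?_)
    · have : (M : EReal) ≤ N := by exact_mod_cast hMN
      refine EReal.toENNReal_le_toENNReal (EReal.neg_le_neg_iff.2 (max_le_max_left _ ?_))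
      exact EReal.neg_le_neg_iff.2 this
    · simpa using ((tendsto_const_nhds (x := f x)).max htop.neg).neg
  simp only [eint_eq_lintegral_toENNReal_sub, hpos]
  have hcont := EReal.continuousAt_add
    (p := (((∫⁻ x, (f x).toENNReal ∂μ : ℝ≥0∞) : EReal), -((∫⁻ x, (-f x).toENNReal ∂μ : ℝ≥0∞))))
    (.inl (mt EReal.coe_ennreal_eq_top_iff.1 hfin)) (.inl (EReal.coe_ennreal_ne_bot _))
  exact hcont.tendsto.comp
    (tendsto_const_nhds.prodMk_nhds ((continuous_coe_ennreal_ereal.tendsto _).comp hneg).neg)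

lemma le_eint_elog_of_forall_le_integral [TopologicalSpace X] [CompactSpace X]
    [OpensMeasurableSpace X] [IsFiniteMeasure μ] {f : X → ℝ} (hf : Continuous f) {c : ℝ}
    (hc : ∀ ψ : C(X, ℝ), (∀ x, f x ≤ Real.exp (ψ x)) → c ≤ ∫ x, ψ x ∂μ) :
    (c : EReal) ≤ eint μ fun x => elog (f x) := by
  have hpos : ∀ (N : ℕ) x, 0 < max (f x) (Real.exp (-N)) := fun N x =>
    lt_max_of_lt_right (Real.exp_pos _)
  let ψ : ℕ → C(X, ℝ) := fun N =>
    ⟨fun x => Real.log (max (f x) (Real.exp (-N))),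
      (hf.max continuous_const).log fun x => (hpos N x).ne'⟩
  have hψ : ∀ (N : ℕ) x, max (elog (f x)) (-(N : EReal)) = (ψ N x : EReal) := fun N x =>
    max_elog_neg_natCast (f x) N
  have hint : ∀ N, Integrable (ψ N) μ := fun N =>
    (ψ N).continuous.integrable_of_hasCompactSupport (.of_compactSpace _)
  have hfin : ∫⁻ x, (elog (f x)).toENNReal ∂μ ≠ ⊤ := by
    refine ne_top_of_le_ne_top (hint 0).lintegral_lt_top.ne (lintegral_mono fun x => ?_)
    exact EReal.toENNReal_le_toENNReal ((le_max_left _ _).trans_eq (hψ 0 x))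
  refine ge_of_tendsto' (tendsto_eint_max_neg_natCast
    hf.measurable.ennreal_ofReal.ennreal_log.aemeasurable hfin) fun N => ?_
  simp only [hψ, eint_coe (hint N), EReal.coe_le_coe_iff]
  exact hc (ψ N) fun x => (le_max_left _ _).trans_eq (Real.exp_log (hpos N x)).symm

end ExtendedIntegral

section EmpiricalMeasures

variable {X : Type*} [MeasurableSpace X]

/-- The uniform distribution on the orbit segment `x, T x, …, Tⁿ x`, counted with multiplicity. The
segment has `n + 1` points so that the measure is a probability for every `n`. -/
noncomputable def empiricalMeasure (T : X → X) (n : ℕ) (x : X) : ProbabilityMeasure X :=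
  ⟨((n + 1 : ℕ) : ℝ≥0∞)⁻¹ • ∑ m ∈ Finset.range (n + 1), Measure.dirac (T^[m] x), ⟨by
    simpa using ENNReal.inv_mul_cancel (a := (n : ℝ≥0∞) + 1) (by simp) (by simp)⟩⟩

lemma integral_empiricalMeasure [MeasurableSingletonClass X] (T : X → X) (n : ℕ) (x : X)
    (g : X → ℝ) :
    ∫ y, g y ∂(empiricalMeasure T n x : Measure X) = birkhoffAverage ℝ T g (n + 1) x := by
  change ∫ y, g y ∂(_ • ∑ m ∈ _, _) = _
  rw [integral_smul_measure, integral_finsetSum_measure fun _ _ => integrable_dirac (by simp)]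
  simp only [integral_dirac, ENNReal.toReal_inv, ENNReal.toReal_natCast, birkhoffAverage,
    birkhoffSum]

variable [TopologicalSpace X] [HasOuterApproxClosed X] [BorelSpace X] {T : X → X}

lemma map_eq_of_tendsto_birkhoffAverage (hT : Continuous T) {μ : Measure X} [IsFiniteMeasure μ]
    {x : ℕ → X} {F : Filter ℕ} [F.NeBot] (hF : F ≤ atTop)
    (hμ : ∀ g : BoundedContinuousFunction X ℝ,
      Tendsto (fun n => birkhoffAverage ℝ T g (n + 1) (x n)) F (𝓝 (∫ y, g y ∂μ))) :
    Measure.map T μ = μ := by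
  refine ext_of_forall_integral_eq_of_IsFiniteMeasure fun g => ?_
  rw [integral_map hT.measurable.aemeasurable g.continuous.aestronglyMeasurable]
  have hshift : Tendsto (fun n => birkhoffAverage ℝ T g (n + 1) (T (x n)) -
      birkhoffAverage ℝ T g (n + 1) (x n)) atTop (𝓝 0) := by
    refine squeeze_zero_norm (fun n => ?_)
      ((tendsto_add_atTop_iff_nat 1).2 (tendsto_const_div_atTop_nhds_zero_nat (2 * ‖g‖)))
    rw [← dist_eq_norm, dist_birkhoffAverage_apply_birkhoffAverage]
    gcongr
    exact g.dist_le_two_norm _ _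
  have hgT := (hμ (g.compContinuous ⟨T, hT⟩)).sub (hμ g)
  refine sub_eq_zero.1 (tendsto_nhds_unique (hgT.congr fun n => ?_) (hshift.mono_left hF))
  simp [birkhoffAverage, birkhoffSum, ← Function.iterate_succ_apply, Function.iterate_succ_apply']

lemma exists_map_eq_tendsto_birkhoffAverage [T2Space X] [CompactSpace X] (hT : Continuous T)
    (x : ℕ → X) :
    ∃ μ : ProbabilityMeasure X, Measure.map T (μ : Measure X) = μ ∧
      ∃ U : Ultrafilter ℕ, ↑U ≤ (atTop : Filter ℕ) ∧ ∀ g : C(X, ℝ),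
        Tendsto (fun n => birkhoffAverage ℝ T g (n + 1) (x n)) U
          (𝓝 (∫ y, g y ∂(μ : Measure X))) := by
  obtain ⟨μ, hμ⟩ := exists_clusterPt_of_compactSpace
    (Filter.map (fun n => empiricalMeasure T n (x n)) atTop)
  obtain ⟨U, hU, hμ⟩ := mapClusterPt_iff_ultrafilter.1 hμ
  have hlim : ∀ g : BoundedContinuousFunction X ℝ,
      Tendsto (fun n => birkhoffAverage ℝ T g (n + 1) (x n)) U
        (𝓝 (∫ y, g y ∂(μ : Measure X))) := by
    simpa only [integral_empiricalMeasure] using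
      ProbabilityMeasure.tendsto_iff_forall_integral_tendsto.1 hμ
  exact ⟨μ, map_eq_of_tendsto_birkhoffAverage hT hU hlim, U, hU,
    fun g => hlim (BoundedContinuousFunction.mkOfCompact g)⟩

end EmpiricalMeasures

section GrowthRates

lemma eventually_pos_of_tendsto_elog_div {a : ℕ → ℝ} {β : ℝ}
    (ha : Tendsto (fun n : ℕ => elog (a n) / (n : EReal)) atTop (𝓝 (β : EReal))) :
    ∀ᶠ n in atTop, 0 < a n := by
  filter_upwards [ha.eventually_ne (EReal.coe_ne_bot β), eventually_gt_atTop 0] with n hn hn0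
  contrapose! hn
  rw [elog, ENNReal.ofReal_of_nonpos hn, ENNReal.log_zero]
  exact EReal.bot_div_of_pos_ne_top (by exact_mod_cast hn0) (EReal.natCast_ne_top n)

lemma tendsto_log_div_of_tendsto_elog_div {a : ℕ → ℝ} {β : ℝ}
    (ha : Tendsto (fun n : ℕ => elog (a n) / (n : EReal)) atTop (𝓝 (β : EReal))) :
    Tendsto (fun n : ℕ => Real.log (a n) / n) atTop (𝓝 β) := by
  refine EReal.tendsto_coe.1 (ha.congr' ?_)
  filter_upwards [eventually_pos_of_tendsto_elog_div ha] with n hn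
  rw [elog, ENNReal.log_ofReal_of_pos hn, EReal.coe_div]
  rfl

lemma le_of_tendsto_eint_elog_div {X : Type*} [MeasurableSpace X] {μ : Measure X}
    [IsProbabilityMeasure μ] {φ : ℕ → X → ℝ}
    (hφ : ∀ n, 1 ≤ n → BddAbove (range (φ n))) {c b : EReal}
    (hc : Tendsto (fun n : ℕ => eint μ (fun x => elog (φ n x)) / (n : EReal)) atTop (𝓝 c))
    (hb : Tendsto (fun n : ℕ => elog (⨆ x, φ n x) / (n : EReal)) atTop (𝓝 b)) : c ≤ b := by
  refine le_of_tendsto_of_tendsto hc hb ?_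
  filter_upwards [eventually_ge_atTop 1] with n hn
  refine EReal.div_le_div_right_of_nonneg (Nat.cast_nonneg' n) ?_
  calc eint μ (fun x => elog (φ n x)) ≤ eint μ (fun _ => elog (⨆ x, φ n x)) :=
        eint_mono fun x => ENNReal.log_monotone (ENNReal.ofReal_le_ofReal (le_ciSup (hφ n hn) x))
    _ = elog (⨆ x, φ n x) := eint_const _

lemma coe_le_of_tendsto_div_natCast {e : ℕ → EReal} {c : EReal} {β : ℝ}
    (hβ : ∀ n : ℕ, 1 ≤ n → ((n * β : ℝ) : EReal) ≤ e n)
    (hc : Tendsto (fun n : ℕ => e n / (n : EReal)) atTop (𝓝 c)) : (β : EReal) ≤ c := by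
  refine ge_of_tendsto hc ?_
  filter_upwards [eventually_ge_atTop 1] with n hn
  rw [EReal.le_div_iff_mul_le (by exact_mod_cast hn) (EReal.natCast_ne_top n), mul_comm]
  exact_mod_cast hβ n hn

end GrowthRates

section SubadditivePotentials

lemma sum_range_add_le_sum_range_add {u v : ℕ → ℝ} {k n : ℕ}
    (huv : ∀ m < n, u (k + m) ≤ u m + v m) :
    ∑ j ∈ Finset.range k, u (n + j) ≤
      ∑ j ∈ Finset.range k, u j + ∑ m ∈ Finset.range n, v m := by
  have htwo := Finset.sum_range_add u n k
  rw [add_comm n k, Finset.sum_range_add u k n] at htwo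
  have hsum := Finset.sum_le_sum fun m hm => huv m (Finset.mem_range.1 hm)
  rw [Finset.sum_add_distrib] at hsum
  linarith

lemma sum_iterate_succ_le_birkhoffSum {X : Type*} (T : X → X) {ψ : X → ℝ} {M : ℝ}
    (hM : ∀ y, -M ≤ ψ y) (n k : ℕ) (x : X) :
    ∑ m ∈ Finset.range n, ψ (T^[m + 1] x) ≤ (k + 1) * M + birkhoffSum T ψ (n + 1 + k) x := by
  have hlast : k • -M ≤ ∑ j ∈ Finset.range k, ψ (T^[n + 1 + j] x) := by
    simpa using Finset.card_nsmul_le_sum (Finset.range k) _ _ fun j _ => hM (T^[n + 1 + j] x)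
  rw [birkhoffSum, Finset.sum_range_add, Finset.sum_range_succ']
  rw [nsmul_eq_mul] at hlast
  linarith [hM (T^[0] x)]

variable {X : Type*} [TopologicalSpace X] {T : X → X} {φ : ℕ → X → ℝ}

namespace SubadditivePotential

lemma pos_of_pos_add (hφ : SubadditivePotential T φ) {n m : ℕ} (hn : 1 ≤ n) (hm : 1 ≤ m) {x : X}
    (hpos : 0 < φ (n + m) x) : 0 < φ n x :=
  pos_of_mul_pos_left (hpos.trans_le (hφ.2.2 m n hm hn x)) (hφ.2.1 m _ hm)

lemma log_add_le_of_le_exp (hφ : SubadditivePotential T φ) {n m : ℕ} (hn : 1 ≤ n) (hm : 1 ≤ m)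
    {x : X} (hpos : 0 < φ (n + m) x) {c : ℝ} (hc : φ m (T^[n] x) ≤ Real.exp c) :
    Real.log (φ (n + m) x) ≤ Real.log (φ n x) + c := by
  have hn0 := hφ.pos_of_pos_add hn hm hpos
  calc Real.log (φ (n + m) x) ≤ Real.log (φ n x * Real.exp c) :=
        Real.log_le_log hpos <| (hφ.2.2 m n hm hn x).trans <| by gcongr
    _ = Real.log (φ n x) + c := by rw [Real.log_mul hn0.ne' (Real.exp_pos c).ne', Real.log_exp]

lemma exists_forall_le_exp [CompactSpace X] (hφ : SubadditivePotential T φ) (k : ℕ) :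
    ∃ C : ℝ, ∀ j ∈ Icc 1 k, ∀ y, φ j y ≤ Real.exp C := by
  have hbdd : BddAbove (⋃ j ∈ Icc 1 k, range (φ j)) :=
    (finite_Icc 1 k).bddAbove_biUnion.2 fun j hj => (isCompact_range (hφ.1 j hj.1)).bddAbove
  obtain ⟨B, hB⟩ := hbdd
  refine ⟨B, fun j hj y => ?_⟩
  have : φ j y ≤ B := hB (mem_biUnion hj (mem_range_self y))
  linarith [Real.add_one_le_exp B]

/-- The increments `log φ (m + k) x - log φ m x ≤ ψ (T^[m] x)` are summed over all `m` at once,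
which treats the `k` residue classes modulo `k` together and avoids dividing the time by `k`. -/
lemma mul_log_le_birkhoffSum (hφ : SubadditivePotential T φ) {k : ℕ} (hk : 1 ≤ k) {C M : ℝ}
    (hC : ∀ j ∈ Icc 1 k, ∀ y, φ j y ≤ Real.exp C) {ψ : X → ℝ}
    (hψ : ∀ y, φ k y ≤ Real.exp (ψ y)) (hM : ∀ y, -M ≤ ψ y) {n : ℕ} {x : X}
    (hpos : 0 < φ (n + 1 + k) x) :
    k * Real.log (φ (n + 1 + k) x) ≤ 2 * k * C + (k + 1) * M + birkhoffSum T ψ (n + 1 + k) x := by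
  set u : ℕ → ℝ := fun m => Real.log (φ (m + 1) x)
  have hpos_lt : ∀ m < n + k, 0 < φ (m + 1) x := fun m hm => by
    refine hφ.pos_of_pos_add (m := n + k - m) (by lia) (by lia) ?_
    rwa [show m + 1 + (n + k - m) = n + 1 + k by lia]
  have hhead : ∑ j ∈ Finset.range k, u j ≤ k * C := by
    simpa using Finset.sum_le_card_nsmul (Finset.range k) u C fun j hj => by
      have hj := Finset.mem_range.1 hj
      exact (Real.log_le_iff_le_exp (hpos_lt j (by lia))).2 (hC _ ⟨by lia, hj⟩ x)
  have htail : k * (Real.log (φ (n + 1 + k) x) - C) ≤ ∑ j ∈ Finset.range k, u (n + j) := by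
    simpa using Finset.card_nsmul_le_sum (Finset.range k) (fun j => u (n + j)) _ fun j hj => by
      have hj := Finset.mem_range.1 hj
      have hsplit : n + 1 + k = n + j + 1 + (k - j) := by lia
      rw [hsplit] at hpos ⊢
      exact sub_le_iff_le_add.2 <|
        hφ.log_add_le_of_le_exp (by lia) (by lia) hpos (hC _ ⟨by lia, by lia⟩ _)
  have hstep : ∀ m < n, u (k + m) ≤ u m + ψ (T^[m + 1] x) := fun m hm => by
    have hkm : k + m + 1 = m + 1 + k := by lia
    have hpos_km := hpos_lt (k + m) (by lia)
    simp only [u, hkm] at hpos_km ⊢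
    exact hφ.log_add_le_of_le_exp (by lia) hk hpos_km (hψ _)
  linarith [sum_range_add_le_sum_range_add hstep, sum_iterate_succ_le_birkhoffSum T hM n k x]

lemma exists_iSup_eq [CompactSpace X] [Nonempty X] (hφ : SubadditivePotential T φ) {n : ℕ}
    (hn : 1 ≤ n) : ∃ x, φ n x = ⨆ y, φ n y :=
  (isCompact_range (hφ.1 n hn)).sSup_mem (range_nonempty _)

lemma mul_le_of_tendsto_birkhoffAverage [CompactSpace X] (hφ : SubadditivePotential T φ) {x : ℕ → X}
    (hpos : ∀ᶠ n in atTop, 0 < φ (n + 1) (x n)) {β : ℝ}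
    (hβ : Tendsto (fun n : ℕ => Real.log (φ (n + 1) (x n)) / (n + 1 : ℕ)) atTop (𝓝 β))
    {k : ℕ} (hk : 1 ≤ k) {ψ : C(X, ℝ)} (hψ : ∀ y, φ k y ≤ Real.exp (ψ y)) {F : Filter ℕ} [F.NeBot]
    (hF : F ≤ atTop) {r : ℝ}
    (hr : Tendsto (fun n => birkhoffAverage ℝ T ψ (n + 1) (x n)) F (𝓝 r)) :
    k * β ≤ r := by
  obtain ⟨C, hC⟩ := hφ.exists_forall_le_exp k
  set D := 2 * k * C + (k + 1) * ‖ψ‖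
  have hD : Tendsto (fun n : ℕ => D / (n + 1 : ℕ)) atTop (𝓝 0) :=
    (tendsto_add_atTop_iff_nat 1).2 (tendsto_const_div_atTop_nhds_zero_nat D)
  have hright : Tendsto (fun n : ℕ => D / (n + 1 : ℕ) + birkhoffAverage ℝ T ψ (n + 1) (x n)) F
      (𝓝 r) := by
    simpa using (hD.mono_left hF).add hr
  refine le_of_tendsto_of_tendsto ((hβ.const_mul (k : ℝ)).mono_left hF) hright (hF ?_)
  filter_upwards [hpos, eventually_ge_atTop k] with n hn hkn
  have hsplit : n + 1 = n - k + 1 + k := by lia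
  rw [hsplit] at hn ⊢
  have hle := hφ.mul_log_le_birkhoffSum hk hC hψ ψ.neg_norm_le_apply hn
  rw [birkhoffAverage, smul_eq_mul, inv_mul_eq_div, ← add_div, mul_div_assoc']
  gcongr

variable [MeasurableSpace X] [BorelSpace X]

theorem exists_map_eq_forall_mul_le_eint [CompactSpace X] [Nonempty X] [T2Space X]
    [HasOuterApproxClosed X] (hφ : SubadditivePotential T φ) (hT : Continuous T) {β : ℝ}
    (hβ : Tendsto (fun n : ℕ => elog (⨆ x, φ n x) / (n : EReal)) atTop (𝓝 (β : EReal))) :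
    ∃ μ : ProbabilityMeasure X, Measure.map T (μ : Measure X) = μ ∧
      ∀ k : ℕ, 1 ≤ k → ((k * β : ℝ) : EReal) ≤ eint (μ : Measure X) fun x => elog (φ k x) := by
  choose x hx using fun n : ℕ => hφ.exists_iSup_eq n.succ_pos
  obtain ⟨μ, hμ, U, hU, hlim⟩ := exists_map_eq_tendsto_birkhoffAverage hT x
  have hpos : ∀ᶠ n in atTop, 0 < φ (n + 1) (x n) := by
    simpa only [hx] using
      (tendsto_add_atTop_nat 1).eventually (eventually_pos_of_tendsto_elog_div hβ)
  have hlog : Tendsto (fun n : ℕ => Real.log (φ (n + 1) (x n)) / (n + 1 : ℕ)) atTop (𝓝 β) := by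
    simpa only [hx] using (tendsto_add_atTop_iff_nat 1).2 (tendsto_log_div_of_tendsto_elog_div hβ)
  exact ⟨μ, hμ, fun k hk => le_eint_elog_of_forall_le_integral (hφ.1 k hk) fun ψ hψ =>
    hφ.mul_le_of_tendsto_birkhoffAverage hpos hlog hk hψ hU (hlim ψ)⟩

end SubadditivePotential

end SubadditivePotentials

theorem entropy_and_normalized_pressure_limits_general
    {X : Type*} [TopologicalSpace X] [T2Space X] [CompactSpace X] [HasOuterApproxClosed X]
    [MeasurableSpace X] [BorelSpace X]
    (T : X → X) (hT : Continuous T)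
    (φ : ℕ → X → ℝ) (hφ : SubadditivePotential T φ)
    (h : ProbabilityMeasure X → ℝ)
    (χ : ProbabilityMeasure X → EReal)
    (hχ : ∀ μ : ProbabilityMeasure X, Measure.map T (μ : Measure X) = (μ : Measure X) →
      Tendsto (fun n : ℕ => eint (μ : Measure X) (fun x => elog (φ n x)) / (n : EReal))
        atTop (𝓝 (χ μ)))
    (β : ℝ)
    (hβ : Tendsto (fun n : ℕ => elog (⨆ x, φ n x) / (n : EReal)) atTop (𝓝 (β : EReal)))
    (P : ℝ → ℝ)
    (hP : ∀ t ∈ Set.Ioi (0 : ℝ), (P t : EReal) =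
      sSup ((fun ν => (h ν : EReal) + (t : EReal) * χ ν) ''
        {ν : ProbabilityMeasure X | Measure.map T (ν : Measure X) = (ν : Measure X)}))
    (μt : ℝ → ProbabilityMeasure X)
    (hEq : ∀ t ∈ Set.Ioi (0 : ℝ),
      Measure.map T (μt t : Measure X) = (μt t : Measure X) ∧
      (h (μt t) : EReal) + (t : EReal) * χ (μt t) = (P t : EReal)) :
    ∃ L : ℝ,
      Tendsto (fun t => h (μt t)) atTop (𝓝 L) ∧
      Tendsto (fun t => P t - t * β) atTop (𝓝 L) ∧
      ∀ ν : ProbabilityMeasure X, Measure.map T (ν : Measure X) = (ν : Measure X) →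
        χ ν = (β : EReal) → h ν ≤ L := by
  have : Nonempty X := (μt 0).nonempty
  have hχβ : ∀ ν : ProbabilityMeasure X, Measure.map T (ν : Measure X) = ν → χ ν ≤ β :=
    fun ν hν => le_of_tendsto_eint_elog_div
      (fun n hn => (isCompact_range (hφ.1 n hn)).bddAbove) (hχ ν hν) hβ
  obtain ⟨μ, hμ, hμβ⟩ := hφ.exists_map_eq_forall_mul_le_eint hT hβ
  have hχμ : χ μ = β := (hχβ μ hμ).antisymm (coe_le_of_tendsto_div_natCast hμβ (hχ μ hμ))
  refine exists_tendsto_entropy_and_pressure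
    (S := {ν : ProbabilityMeasure X | Measure.map T (ν : Measure X) = ν}) hχβ ⟨μ, hμ, hχμ⟩
    (fun t ht ν hν => ?_) (fun t ht => (hEq t ht).1) fun t ht => (hEq t ht).2
  rw [hP t ht]
  exact le_sSup (mem_image_of_mem _ hν)

/-- lim_{t→∞} h_{μ_t}(T) = lim_{t→∞} P(tΦ − tβ(Φ)) = lim (P(t) − tβ(Φ)),
both limits existing, and the common value is ≥ sup{h_ν(T) : ν ∈ M_max(Φ)}. -/
theorem entropy_and_normalized_pressure_limits
    {X : Type*} [MetricSpace X] [CompactSpace X] [Nonempty X]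
    [MeasurableSpace X] [BorelSpace X]
    (T : X → X) (hT : Continuous T)
    (φ : ℕ → X → ℝ) (hφ : SubadditivePotential T φ)
    -- metric entropies: nonnegative, bounded (finite topological entropy), and
    -- upper semi-continuous on the set of invariant measures
    (h : ProbabilityMeasure X → ℝ) (hh0 : ∀ μ, 0 ≤ h μ)
    (htop : ∃ H : ℝ, ∀ μ : ProbabilityMeasure X,
      Measure.map T (μ : Measure X) = (μ : Measure X) → h μ ≤ H)
    (husc : UpperSemicontinuousOn h
      {μ : ProbabilityMeasure X | Measure.map T (μ : Measure X) = (μ : Measure X)})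
    -- Lyapunov exponents of invariant measures
    (χ : ProbabilityMeasure X → EReal)
    (hχ : ∀ μ : ProbabilityMeasure X, Measure.map T (μ : Measure X) = (μ : Measure X) →
      Tendsto (fun n : ℕ => eint (μ : Measure X) (fun x => elog (φ n x)) / (n : EReal))
        atTop (𝓝 (χ μ)))
    -- β(Φ) > -∞ (and β(Φ) < ∞ always holds), so β(Φ) is a real number
    (β : ℝ)
    (hβ : Tendsto (fun n : ℕ => elog (⨆ x, φ n x) / (n : EReal)) atTop (𝓝 (β : EReal)))
    -- the topological pressure, via the variational principle, and equilibrium states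
    (P : ℝ → ℝ)
    (hP : ∀ t ∈ Set.Ioi (0 : ℝ), (P t : EReal) =
      sSup ((fun ν => (h ν : EReal) + (t : EReal) * χ ν) ''
        {ν : ProbabilityMeasure X | Measure.map T (ν : Measure X) = (ν : Measure X)}))
    (μt : ℝ → ProbabilityMeasure X)
    (hEq : ∀ t ∈ Set.Ioi (0 : ℝ),
      Measure.map T (μt t : Measure X) = (μt t : Measure X) ∧
      (h (μt t) : EReal) + (t : EReal) * χ (μt t) = (P t : EReal))
    :
    ∃ L : ℝ,
      Tendsto (fun t => h (μt t)) atTop (𝓝 L) ∧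
      Tendsto (fun t => P t - t * β) atTop (𝓝 L) ∧
      ∀ ν : ProbabilityMeasure X, Measure.map T (ν : Measure X) = (ν : Measure X) →
        χ ν = (β : EReal) → h ν ≤ L :=
  entropy_and_normalized_pressure_limits_general T hT φ hφ h χ hχ β hβ P hP μt hEq
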